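/- Let n ≥ 3 and let E_n = (ℝⁿ, ‖·‖₂) be the n-dimensional Euclidean space. If Q is any bounded linear projection from Lip₀(B_{E_n}) onto P(²E_n) (the latter viewed as a subspace of Lip₀(B_{E_n}) via restriction of polynomials to the unit ball), then ‖Q‖ ≥ C·(n − 2√2)^{1/5}, where C = (2/5)·((√2 − 1)/3 · π/72)^{1/5}. -/

import Mathlib

open Metric Set Real

noncomputable section

/-- The closed unit ball of a normed space, as a pointed metric space. -/
def UBall (X : Type*) [NormedAddCommGroup X] : Set X := Metric.closedBall (0 : X) 1

/-- The base point of the unit ball. -/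
def zeroB (X : Type*) [NormedAddCommGroup X] : ↥(UBall X) :=
  ⟨0, Metric.mem_closedBall_self zero_le_one⟩

/-- `Lip₀(B_X)`: real-valued Lipschitz functions on the closed unit ball vanishing at `0`. -/
def Lip0B (X : Type*) [NormedAddCommGroup X] : Set (↥(UBall X) → ℝ) :=
  {f | (∃ K : NNReal, LipschitzWith K f) ∧ f (zeroB X) = 0}

/-- The image of the space `P(ᵏX)` of `k`-homogeneous polynomials on `X` inside the
functions on the unit ball, via the restriction embedding `P ↦ P↾_{B_X}`. -/
def PhomB (k : ℕ) (X : Type*) [NormedAddCommGroup X] [NormedSpace ℝ X] :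
    Set (↥(UBall X) → ℝ) :=
  {f | ∃ M : ContinuousMultilinearMap ℝ (fun _ : Fin k => X) ℝ,
    ∀ x : ↥(UBall X), f x = M (fun _ => (x : X))}

/-- `C₀¹(B_E)`: functions on the closed unit ball that are continuous on the closed ball,
continuously differentiable on the open ball with uniformly continuous derivative,
and vanish at `0`. -/
def C01B (E : Type*) [NormedAddCommGroup E] [NormedSpace ℝ E] :
    Set (↥(UBall E) → ℝ) :=
  {f | ∃ g : E → ℝ,
    (∀ x : ↥(UBall E), f x = g x) ∧
    ContinuousOn g (UBall E) ∧ g 0 = 0 ∧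
    ∃ g' : E → (E →L[ℝ] ℝ),
      (∀ x ∈ Metric.ball (0 : E) 1, HasFDerivAt g (g' x) x) ∧
      UniformContinuousOn g' (Metric.ball (0 : E) 1)}


/-- Sign attached to a boolean. -/
def sgB (b : Bool) : ℝ := if b then 1 else -1

lemma sgB_sq (b : Bool) : sgB b * sgB b = 1 := by cases b <;> simp [sgB]

lemma sgB_abs (b : Bool) : |sgB b| = 1 := by cases b <;> simp [sgB]

lemma sum_cons_bool {n : ℕ} (F : (Fin (n + 1) → Bool) → ℝ) :
    ∑ e : Fin (n + 1) → Bool, F e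
      = ∑ e : Fin n → Bool, (F (Fin.cons true e) + F (Fin.cons false e)) := by
  rw [← Equiv.sum_comp (Fin.consEquiv (fun _ : Fin (n + 1) => Bool)), Fintype.sum_prod_type,
    Fintype.sum_bool, ← Finset.sum_add_distrib]
  rfl

lemma moment_two (n : ℕ) (x : Fin n → ℝ) :
    ∑ e : Fin n → Bool, (∑ i, sgB (e i) * x i) ^ 2 = 2 ^ n * ∑ i, x i ^ 2 := by
  induction n with
  | zero => simp
  | succ n ih =>
    rw [sum_cons_bool]
    have h : ∀ e : Fin n → Bool,
        (∑ i, sgB ((Fin.cons true e : Fin (n + 1) → Bool) i) * x i) ^ 2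
          + (∑ i, sgB ((Fin.cons false e : Fin (n + 1) → Bool) i) * x i) ^ 2
        = 2 * x 0 ^ 2 + 2 * (∑ i, sgB (e i) * x i.succ) ^ 2 := by
      intro e
      simp only [Fin.sum_univ_succ, Fin.cons_zero, Fin.cons_succ, sgB]
      simp only [if_true, Bool.false_eq_true, if_false]
      ring
    simp only [h, Finset.sum_add_distrib, ← Finset.mul_sum, ih (fun i => x i.succ),
      Fin.sum_univ_succ (fun i => x i ^ 2)]
    simp
    ring

lemma moment_four (n : ℕ) (x : Fin n → ℝ) :
    ∑ e : Fin n → Bool, (∑ i, sgB (e i) * x i) ^ 4 ≤ 3 * 2 ^ n * (∑ i, x i ^ 2) ^ 2 := by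
  induction n with
  | zero => simp
  | succ n ih =>
    rw [sum_cons_bool]
    have h : ∀ e : Fin n → Bool,
        (∑ i, sgB ((Fin.cons true e : Fin (n + 1) → Bool) i) * x i) ^ 4
          + (∑ i, sgB ((Fin.cons false e : Fin (n + 1) → Bool) i) * x i) ^ 4
        = 2 * x 0 ^ 4 + 12 * x 0 ^ 2 * (∑ i, sgB (e i) * x i.succ) ^ 2
          + 2 * (∑ i, sgB (e i) * x i.succ) ^ 4 := by
      intro e
      simp only [Fin.sum_univ_succ, Fin.cons_zero, Fin.cons_succ, sgB]
      simp only [if_true, Bool.false_eq_true, if_false]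
      ring
    have h4 := ih (fun i => x i.succ)
    simp only [h, Finset.sum_add_distrib, ← Finset.mul_sum, moment_two n (fun i => x i.succ),
      Fin.sum_univ_succ (fun i => x i ^ 2)]
    simp only [Finset.sum_const, Finset.card_univ, Fintype.card_fun, Fintype.card_bool,
      Fintype.card_fin, nsmul_eq_mul]
    push_cast
    have h5 : (0 : ℝ) ≤ 2 ^ n * x 0 ^ 4 := by positivity
    rw [pow_succ (2 : ℝ) n]
    nlinarith [h4, h5]

lemma abs_sin_sub_le (t : ℝ) : |Real.sin t - t| ≤ t ^ 2 / 2 := by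
  have key : ∀ t : ℝ, 0 ≤ t → |Real.sin t - t| ≤ t ^ 2 / 2 := by
    intro t ht
    have h1 : Real.sin t ≤ t := Real.sin_le ht
    rw [abs_of_nonpos (by linarith)]
    have hm : MonotoneOn (fun t : ℝ => t ^ 2 / 2 - t + Real.sin t) (Set.Ici 0) := by
      apply monotoneOn_of_deriv_nonneg (convex_Ici 0)
      · fun_prop
      · fun_prop
      · intro y hy
        simp only [interior_Ici, Set.mem_Ioi] at hy
        have hd : HasDerivAt (fun t : ℝ => t ^ 2 / 2 - t + Real.sin t)
            (y - 1 + Real.cos y) y := by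
          have := (((hasDerivAt_pow 2 y).div_const 2).sub (hasDerivAt_id y)).add
            (Real.hasDerivAt_sin y)
          exact this.congr_deriv (by norm_num)
        rw [hd.deriv]
        rcases le_total y 2 with h | h
        · nlinarith [Real.one_sub_sq_div_two_le_cos (x := y)]
        · linarith [Real.neg_one_le_cos y]
    have := hm (Set.mem_Ici.2 le_rfl) (Set.mem_Ici.2 ht) ht
    simp at this
    linarith
  rcases le_total 0 t with h | h
  · exact key t h
  · have := key (-t) (by linarith)
    rw [Real.sin_neg, ← abs_neg] at this
    convert this using 2 <;> ring

/-- The remainder in the quadratic expansion of `1 - cos`. -/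
def psiR (t : ℝ) : ℝ := 1 - Real.cos t - t ^ 2 / 2

lemma psiR_lip (a b : ℝ) : |psiR a - psiR b| ≤ |a - b| * (a ^ 2 + b ^ 2) / 2 := by
  have h := Convex.norm_image_sub_le_of_norm_hasDerivWithin_le (f := psiR)
    (f' := fun t => Real.sin t - t) (C := (a ^ 2 + b ^ 2) / 2) (s := Set.uIcc b a) (x := b) (y := a)
    (fun t _ => by
      have h := ((hasDerivAt_const t (1 : ℝ)).sub (Real.hasDerivAt_cos t)).sub
        ((hasDerivAt_pow 2 t).div_const 2)
      have h2 : HasDerivAt psiR (Real.sin t - t) t := by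
        exact h.congr_deriv (by norm_num)
      exact h2.hasDerivWithinAt)
    (fun t ht => by
      rw [Real.norm_eq_abs]
      refine (abs_sin_sub_le t).trans ?_
      have : t ^ 2 ≤ a ^ 2 + b ^ 2 := by
        rcases Set.mem_uIcc.1 ht with ⟨h1, h2⟩ | ⟨h1, h2⟩ <;>
          rcases le_total 0 t with h0 | h0 <;> nlinarith [sq_nonneg a, sq_nonneg b]
      linarith)
    (convex_uIcc b a) Set.left_mem_uIcc Set.right_mem_uIcc
  simp only [Real.norm_eq_abs] at h
  linarith

/-- The linear form given by a sign vector. -/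
def sB {n : ℕ} (e : Fin n → Bool) (x : EuclideanSpace ℝ (Fin n)) : ℝ := ∑ i, sgB (e i) * x i

lemma sB_sub {n : ℕ} (e : Fin n → Bool) (x y : EuclideanSpace ℝ (Fin n)) :
    sB e (x - y) = sB e x - sB e y := by
  simp [sB, mul_sub, Finset.sum_sub_distrib]

lemma sB_two {n : ℕ} (x : EuclideanSpace ℝ (Fin n)) :
    ∑ e : Fin n → Bool, sB e x ^ 2 = 2 ^ n * ‖x‖ ^ 2 := by
  rw [EuclideanSpace.real_norm_sq_eq]; exact moment_two n x

lemma sB_four {n : ℕ} (x : EuclideanSpace ℝ (Fin n)) :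
    ∑ e : Fin n → Bool, sB e x ^ 4 ≤ 3 * 2 ^ n * (‖x‖ ^ 2) ^ 2 := by
  rw [EuclideanSpace.real_norm_sq_eq]; exact moment_four n x

lemma sB_abs_le {n : ℕ} (e : Fin n → Bool) (x : EuclideanSpace ℝ (Fin n)) :
    |sB e x| ≤ √n * ‖x‖ := by
  apply abs_le_of_sq_le_sq _ (by positivity)
  rw [mul_pow, Real.sq_sqrt (by positivity), EuclideanSpace.real_norm_sq_eq]
  have := Finset.sum_mul_sq_le_sq_mul_sq Finset.univ (fun i => sgB (e i)) (fun i => x i)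
  simpa [pow_two, sgB_sq, sB] using this

lemma sum_cross {n : ℕ} (h x : EuclideanSpace ℝ (Fin n)) (hx : ‖x‖ ≤ 1) :
    ∑ e : Fin n → Bool, |sB e h| * sB e x ^ 2 ≤ 2 ^ n * 2 * ‖h‖ := by
  rcases eq_or_ne h 0 with rfl | hh
  · simp [sB]
  have hp : 0 < ‖h‖ := norm_pos_iff.2 hh
  have h1 : ∑ e : Fin n → Bool, ‖h‖ * (|sB e h| * sB e x ^ 2)
      ≤ ∑ e : Fin n → Bool, (1 / 2 * sB e h ^ 2 + ‖h‖ ^ 2 / 2 * sB e x ^ 4) := by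
    apply Finset.sum_le_sum
    intro e _
    have := sq_nonneg (|sB e h| - ‖h‖ * sB e x ^ 2)
    nlinarith [sq_abs (sB e h)]
  rw [← Finset.mul_sum, Finset.sum_add_distrib, ← Finset.mul_sum, ← Finset.mul_sum, sB_two] at h1
  have h4 := sB_four x
  have h5 : (‖x‖ ^ 2) ^ 2 ≤ 1 := by
    apply pow_le_one₀ (by positivity)
    apply pow_le_one₀ (by positivity) hx
  have h6 : ∑ e : Fin n → Bool, sB e x ^ 4 ≤ 3 * 2 ^ n := by
    refine h4.trans ?_
    have : (0 : ℝ) ≤ 3 * 2 ^ n := by positivity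
    nlinarith
  have h7 := mul_le_mul_of_nonneg_left h6 (by positivity : 0 ≤ ‖h‖ ^ 2 / 2)
  have h8 : ‖h‖ * ∑ e : Fin n → Bool, |sB e h| * sB e x ^ 2 ≤ ‖h‖ * (2 ^ n * 2 * ‖h‖) := by
    nlinarith
  exact le_of_mul_le_mul_left h8 hp

/-- The sign form as a continuous linear map. -/
def sL {n : ℕ} (e : Fin n → Bool) : EuclideanSpace ℝ (Fin n) →L[ℝ] ℝ :=
  ∑ i, sgB (e i) • (EuclideanSpace.proj i : EuclideanSpace ℝ (Fin n) →L[ℝ] ℝ)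

lemma sL_apply {n : ℕ} (e : Fin n → Bool) (x : EuclideanSpace ℝ (Fin n)) :
    sL e x = sB e x := by
  simp [sL, sB]

lemma sq_mem_PhomB {X : Type*} [NormedAddCommGroup X] [NormedSpace ℝ X] (l : X →L[ℝ] ℝ) :
    (fun x : ↥(UBall X) => (l x) ^ 2) ∈ PhomB 2 X := by
  refine ⟨(ContinuousMultilinearMap.mkPiAlgebra ℝ (Fin 2) ℝ).compContinuousLinearMap
    (fun _ => l), ?_⟩
  intro x
  simp

lemma sub_smul_mem_PhomB {X : Type*} [NormedAddCommGroup X] [NormedSpace ℝ X]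
    {g₁ g₂ : ↥(UBall X) → ℝ} (h₁ : g₁ ∈ PhomB 2 X) (h₂ : g₂ ∈ PhomB 2 X) (c : ℝ) :
    g₁ - c • g₂ ∈ PhomB 2 X := by
  obtain ⟨M₁, h₁⟩ := h₁
  obtain ⟨M₂, h₂⟩ := h₂
  exact ⟨M₁ - c • M₂, fun x => by simp [h₁, h₂]⟩

/-- The basis vectors. -/
def bv {n : ℕ} (i : Fin n) : EuclideanSpace ℝ (Fin n) := EuclideanSpace.single i (1 : ℝ)

lemma norm_bv {n : ℕ} (i : Fin n) : ‖bv i‖ = 1 := by simp [bv]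

/-- Half-sum points. -/
def Pp {n : ℕ} (i j : Fin n) : ↥(UBall (EuclideanSpace ℝ (Fin n))) :=
  ⟨(1 / 2 : ℝ) • (bv i + bv j), by
    rw [UBall, mem_closedBall_zero_iff, norm_smul]
    have := norm_add_le (bv i) (bv j)
    rw [norm_bv, norm_bv] at this
    norm_num
    linarith⟩

/-- Half-difference points. -/
def Nn {n : ℕ} (i j : Fin n) : ↥(UBall (EuclideanSpace ℝ (Fin n))) :=
  ⟨(1 / 2 : ℝ) • (bv i - bv j), by
    rw [UBall, mem_closedBall_zero_iff, norm_smul]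
    have := norm_sub_le (bv i) (bv j)
    rw [norm_bv, norm_bv] at this
    norm_num
    linarith⟩

lemma dist_Pp_Nn {n : ℕ} (i j : Fin n) : dist (Pp i j) (Nn i j) = 1 := by
  rw [Subtype.dist_eq, dist_eq_norm]
  have : ((Pp i j : ↥(UBall (EuclideanSpace ℝ (Fin n)))) : EuclideanSpace ℝ (Fin n))
      - (Nn i j : ↥(UBall (EuclideanSpace ℝ (Fin n)))) = bv j := by
    simp only [Pp, Nn]
    module
  rw [this, norm_bv]

/-- Normalised sign vectors. -/
def sv {n : ℕ} (e : Fin n → Bool) : EuclideanSpace ℝ (Fin n) :=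
  (1 / √n) • ∑ i, sgB (e i) • bv i

lemma sv_apply {n : ℕ} (e : Fin n → Bool) (i : Fin n) : sv e i = (1 / √n) * sgB (e i) := by
  simp [sv, bv, Finset.sum_apply, Pi.single_apply]

lemma sB_sv {n : ℕ} (e : Fin n → Bool) : sB e (sv e) = √n := by
  have h : ∀ i, sgB (e i) * sv e i = 1 / √n := by
    intro i
    rw [sv_apply]
    linear_combination (1 / √n) * sgB_sq (e i)
  simp only [sB, h]
  simp only [Finset.sum_const, Finset.card_univ, Fintype.card_fin, nsmul_eq_mul]
  rw [mul_one_div, Real.div_sqrt]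

lemma norm_sv_le {n : ℕ} (e : Fin n → Bool) : ‖sv e‖ ≤ 1 := by
  have h2 : ‖sv e‖ ^ 2 ≤ 1 := by
    rw [EuclideanSpace.real_norm_sq_eq]
    have h : ∀ i, sv e i ^ 2 = 1 / n := by
      intro i
      rw [sv_apply, mul_pow, div_pow, Real.sq_sqrt (by positivity), pow_two (sgB _), sgB_sq]
      simp
    simp only [h]
    simp only [Finset.sum_const, Finset.card_univ, Fintype.card_fin, nsmul_eq_mul]
    rw [mul_one_div]
    exact div_self_le_one _
  nlinarith [norm_nonneg (sv e)]

/-- Normalised sign vectors as points of the ball. -/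
def vB {n : ℕ} (e : Fin n → Bool) : ↥(UBall (EuclideanSpace ℝ (Fin n))) :=
  ⟨sv e, by rw [UBall, mem_closedBall_zero_iff]; exact norm_sv_le e⟩

lemma expansion {n : ℕ} (g : ↥(UBall (EuclideanSpace ℝ (Fin n))) → ℝ)
    (hg : g ∈ PhomB 2 (EuclideanSpace ℝ (Fin n))) (e : Fin n → Bool) :
    (n : ℝ) * g (vB e) = ∑ i, ∑ j, (sgB (e i) * sgB (e j)) * (g (Pp i j) - g (Nn i j)) := by
  obtain ⟨M, hM⟩ := hg
  have u0 : ∀ x y z : EuclideanSpace ℝ (Fin n), Function.update ![x, y] 0 z = ![z, y] := by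
    intro x y z
    ext i : 1
    fin_cases i <;> rfl
  have u1 : ∀ x y z : EuclideanSpace ℝ (Fin n), Function.update ![x, y] 1 z = ![x, z] := by
    intro x y z
    ext i : 1
    fin_cases i <;> rfl
  let B : EuclideanSpace ℝ (Fin n) →ₗ[ℝ] EuclideanSpace ℝ (Fin n) →ₗ[ℝ] ℝ :=
    LinearMap.mk₂ ℝ (fun x y => M ![x, y])
      (fun x x' y => by
        have := M.map_update_add ![x, y] 0 x x'
        rwa [u0, u0, u0] at this)
      (fun c x y => by
        have := M.map_update_smul ![x, y] 0 c x
        rwa [u0, u0] at this)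
      (fun x y y' => by
        have := M.map_update_add ![x, y] 1 y y'
        rwa [u1, u1, u1] at this)
      (fun c x y => by
        have := M.map_update_smul ![x, y] 1 c y
        rwa [u1, u1] at this)
  have hB : ∀ x : ↥(UBall (EuclideanSpace ℝ (Fin n))), g x = B x x := by
    intro x
    rw [hM]
    change M _ = M ![(x : EuclideanSpace ℝ (Fin n)), x]
    congr 1
    ext i : 1
    fin_cases i <;> rfl
  have hd : ∀ i j : Fin n, g (Pp i j) - g (Nn i j)
      = 1 / 2 * B (bv i) (bv j) + 1 / 2 * B (bv j) (bv i) := by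
    intro i j
    rw [hB, hB]
    simp only [Pp, Nn, map_smul, map_add, map_sub, LinearMap.smul_apply, LinearMap.add_apply,
      LinearMap.sub_apply, smul_eq_mul]
    ring
  rcases Nat.eq_zero_or_pos n with h0 | h0
  · subst h0
    simp
  have hn : (0 : ℝ) < n := by exact_mod_cast h0
  have hS : (n : ℝ) * g (vB e) = ∑ i, ∑ j, (sgB (e i) * sgB (e j)) * B (bv i) (bv j) := by
    rw [hB]
    simp only [vB, sv, map_smul, map_sum, LinearMap.smul_apply, LinearMap.sum_apply, smul_eq_mul]
    have hone : (n : ℝ) * (1 / √n) * (1 / √n) = 1 := by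
      have := Real.mul_self_sqrt hn.le
      have h2 : (0 : ℝ) < √n := Real.sqrt_pos.2 hn
      field_simp
      nlinarith
    calc _ = ((n : ℝ) * (1 / √n) * (1 / √n)) *
          ∑ i, ∑ j, (sgB (e i) * sgB (e j)) * B (bv j) (bv i) := by
          simp only [Finset.mul_sum]
          refine Finset.sum_congr rfl fun i _ => Finset.sum_congr rfl fun j _ => ?_
          ring
      _ = _ := by
          rw [hone, one_mul, Finset.sum_comm]
          refine Finset.sum_congr rfl fun i _ => Finset.sum_congr rfl fun j _ => ?_
          ring
  have hS' : (n : ℝ) * g (vB e) = ∑ i, ∑ j, (sgB (e i) * sgB (e j)) * B (bv j) (bv i) := by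
    rw [hS, Finset.sum_comm]
    refine Finset.sum_congr rfl fun i _ => Finset.sum_congr rfl fun j _ => ?_
    ring
  have : (n : ℝ) * g (vB e) = 1 / 2 * (∑ i, ∑ j, (sgB (e i) * sgB (e j)) * B (bv i) (bv j))
      + 1 / 2 * ∑ i, ∑ j, (sgB (e i) * sgB (e j)) * B (bv j) (bv i) := by
    rw [← hS, ← hS']; ring
  rw [this]
  simp only [hd, Finset.mul_sum, ← Finset.sum_add_distrib]
  refine Finset.sum_congr rfl fun i _ => Finset.sum_congr rfl fun j _ => ?_
  ring

/-- The remainder functions on the ball. -/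
def psB {n : ℕ} (τ : ℝ) (e : Fin n → Bool) : ↥(UBall (EuclideanSpace ℝ (Fin n))) → ℝ :=
  fun x => psiR (τ * sB e x)

/-- The signed sums of the remainder functions. -/
def GB {n : ℕ} (τ : ℝ) (i j : Fin n) : ↥(UBall (EuclideanSpace ℝ (Fin n))) → ℝ :=
  ∑ e : Fin n → Bool, (sgB (e i) * sgB (e j)) • psB τ e

lemma psB_lip {n : ℕ} (τ : ℝ) (hτ : 0 ≤ τ) (e : Fin n → Bool)
    (x y : ↥(UBall (EuclideanSpace ℝ (Fin n)))) :
    |psB τ e x - psB τ e y| ≤ τ ^ 3 / 2 *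
      (|sB e ((x : EuclideanSpace ℝ (Fin n)) - (y : EuclideanSpace ℝ (Fin n)))| * sB e x ^ 2
        + |sB e ((x : EuclideanSpace ℝ (Fin n)) - (y : EuclideanSpace ℝ (Fin n)))| * sB e y ^ 2) := by
  have h := psiR_lip (τ * sB e x) (τ * sB e y)
  rw [← mul_sub, abs_mul, abs_of_nonneg hτ, ← sB_sub] at h
  refine h.trans (le_of_eq ?_)
  ring

lemma GB_lip {n : ℕ} (τ : NNReal) (i j : Fin n) :
    LipschitzWith (2 ^ n * 2 * τ ^ 3) (GB (τ : ℝ) i j) := by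
  apply LipschitzWith.of_dist_le_mul
  intro x y
  rw [Real.dist_eq, Subtype.dist_eq, dist_eq_norm]
  have hx : ‖(x : EuclideanSpace ℝ (Fin n))‖ ≤ 1 := mem_closedBall_zero_iff.1 x.2
  have hy : ‖(y : EuclideanSpace ℝ (Fin n))‖ ≤ 1 := mem_closedBall_zero_iff.1 y.2
  have h1 : GB (τ : ℝ) i j x - GB (τ : ℝ) i j y
      = ∑ e : Fin n → Bool, (sgB (e i) * sgB (e j)) * (psB τ e x - psB τ e y) := by
    simp [GB, Finset.sum_apply, mul_sub, Finset.sum_sub_distrib]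
  rw [h1]
  refine (Finset.abs_sum_le_sum_abs _ _).trans ?_
  have h2 : ∀ e ∈ (Finset.univ : Finset (Fin n → Bool)),
      |(sgB (e i) * sgB (e j)) * (psB τ e x - psB τ e y)| ≤ (τ : ℝ) ^ 3 / 2 *
      (|sB e ((x : EuclideanSpace ℝ (Fin n)) - (y : EuclideanSpace ℝ (Fin n)))| * sB e x ^ 2
        + |sB e ((x : EuclideanSpace ℝ (Fin n)) - (y : EuclideanSpace ℝ (Fin n)))| * sB e y ^ 2) := by
    intro e _
    rw [abs_mul, abs_mul, sgB_abs, sgB_abs, one_mul, one_mul]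
    exact psB_lip τ τ.2 e x y
  refine (Finset.sum_le_sum h2).trans ?_
  rw [← Finset.mul_sum, Finset.sum_add_distrib]
  have h3 := sum_cross ((x : EuclideanSpace ℝ (Fin n)) - (y : EuclideanSpace ℝ (Fin n))) x hx
  have h4 := sum_cross ((x : EuclideanSpace ℝ (Fin n)) - (y : EuclideanSpace ℝ (Fin n))) y hy
  have h5 := mul_le_mul_of_nonneg_left (add_le_add h3 h4)
    (by positivity : (0 : ℝ) ≤ (τ : ℝ) ^ 3 / 2)
  refine h5.trans (le_of_eq ?_)
  push_cast
  ring

lemma GB_mem {n : ℕ} (τ : NNReal) (i j : Fin n) :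
    GB (τ : ℝ) i j ∈ Lip0B (EuclideanSpace ℝ (Fin n)) := by
  refine ⟨⟨_, GB_lip τ i j⟩, ?_⟩
  simp [GB, psB, psiR, sB, zeroB]

/-- The cosine test functions. -/
def fB {n : ℕ} (τ : ℝ) (e : Fin n → Bool) : ↥(UBall (EuclideanSpace ℝ (Fin n))) → ℝ :=
  fun x => 1 - Real.cos (τ * sB e x)

lemma fB_lip {n : ℕ} (τ : NNReal) (e : Fin n → Bool) :
    LipschitzWith (τ * NNReal.sqrt n) (fB (τ : ℝ) e) := by
  apply LipschitzWith.of_dist_le_mul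
  intro x y
  rw [Real.dist_eq, Subtype.dist_eq, dist_eq_norm]
  have h1 : fB (τ : ℝ) e x - fB (τ : ℝ) e y
      = Real.cos (τ * sB e y) - Real.cos (τ * sB e x) := by
    simp [fB]
  rw [h1]
  refine (Real.abs_cos_sub_cos_le _ _).trans ?_
  rw [← mul_sub, ← sB_sub, abs_mul, NNReal.abs_eq]
  have := sB_abs_le e ((y : EuclideanSpace ℝ (Fin n)) - x)
  rw [norm_sub_rev] at this
  push_cast
  rw [mul_assoc]
  exact mul_le_mul_of_nonneg_left this τ.2

lemma fB_mem {n : ℕ} (τ : NNReal) (e : Fin n → Bool) :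
    fB (τ : ℝ) e ∈ Lip0B (EuclideanSpace ℝ (Fin n)) := by
  refine ⟨⟨_, fB_lip τ e⟩, ?_⟩
  simp [fB, sB, zeroB]

lemma psB_eq {n : ℕ} (τ : ℝ) (e : Fin n → Bool) :
    psB τ e = fB τ e - (τ ^ 2 / 2) •
      (fun x : ↥(UBall (EuclideanSpace ℝ (Fin n))) => (sL e x) ^ 2) := by
  ext x
  simp [psB, fB, psiR, sL_apply]
  ring

lemma main_bound (n : ℕ) (hn : 1 ≤ n)
    (Q : (↥(UBall (EuclideanSpace ℝ (Fin n))) → ℝ) →ₗ[ℝ]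
         (↥(UBall (EuclideanSpace ℝ (Fin n))) → ℝ))
    (hrange : ∀ f ∈ Lip0B (EuclideanSpace ℝ (Fin n)), Q f ∈ PhomB 2 (EuclideanSpace ℝ (Fin n)))
    (hproj : ∀ f ∈ PhomB 2 (EuclideanSpace ℝ (Fin n)), Q f = f)
    (K : NNReal)
    (hK : ∀ f ∈ Lip0B (EuclideanSpace ℝ (Fin n)), ∀ L : NNReal,
      LipschitzWith L f → LipschitzWith (K * L) (Q f)) (τ : NNReal) :
    (τ : ℝ) ^ 2 / 2 * n ≤ K * (τ * √n) + n * (2 * τ ^ 3 * K) := by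
  have hn0 : (0 : ℝ) < n := by exact_mod_cast hn
  have hQps : ∀ e : Fin n → Bool, Q (psB τ e) = Q (fB τ e) - ((τ : ℝ) ^ 2 / 2) •
      (fun x : ↥(UBall (EuclideanSpace ℝ (Fin n))) => (sL e x) ^ 2) := by
    intro e
    rw [psB_eq, map_sub, map_smul, hproj _ (sq_mem_PhomB (sL e))]
  have hmem : ∀ e : Fin n → Bool, Q (psB τ e) ∈ PhomB 2 (EuclideanSpace ℝ (Fin n)) := by
    intro e
    rw [hQps]
    exact sub_smul_mem_PhomB (hrange _ (fB_mem τ e)) (sq_mem_PhomB (sL e)) _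
  -- lower bound for each sign vector
  have hlow : ∀ e : Fin n → Bool,
      (τ : ℝ) ^ 2 / 2 * n - K * (τ * √n) ≤ - Q (psB τ e) (vB e) := by
    intro e
    have h1 := (hK _ (fB_mem τ e) _ (fB_lip τ e)).dist_le_mul (vB e) (zeroB _)
    have h0 : Q (fB τ e) (zeroB _) = 0 := by
      obtain ⟨M, hM⟩ := hrange _ (fB_mem τ e)
      rw [hM]
      exact M.map_coord_zero 0 rfl
    have hd : dist (vB e) (zeroB (EuclideanSpace ℝ (Fin n))) ≤ 1 := by
      rw [Subtype.dist_eq]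
      simpa [vB, zeroB] using norm_sv_le e
    rw [h0, Real.dist_eq, sub_zero] at h1
    have h2 := h1.trans (mul_le_mul_of_nonneg_left hd (NNReal.coe_nonneg _))
    have h3 := (le_abs_self _).trans h2
    push_cast at h3
    have h4 : (sL e (vB e : EuclideanSpace ℝ (Fin n))) ^ 2 = n := by
      rw [sL_apply]
      change sB e (sv e) ^ 2 = _
      rw [sB_sv, Real.sq_sqrt hn0.le]
    rw [hQps]
    simp only [Pi.sub_apply, Pi.smul_apply, smul_eq_mul, h4]
    linarith
  have hsum : (2 : ℝ) ^ n * ((τ : ℝ) ^ 2 / 2 * n - K * (τ * √n))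
      ≤ - ∑ e : Fin n → Bool, Q (psB τ e) (vB e) := by
    rw [← Finset.sum_neg_distrib]
    have := Finset.sum_le_sum (s := Finset.univ) (fun e _ => hlow e)
    simp only [Finset.sum_const, Finset.card_univ, Fintype.card_fun, Fintype.card_bool,
      Fintype.card_fin, nsmul_eq_mul] at this
    push_cast at this
    exact this
  have hQG : ∀ i j : Fin n, Q (GB τ i j) (Pp i j) - Q (GB τ i j) (Nn i j)
      = ∑ e : Fin n → Bool, (sgB (e i) * sgB (e j)) *
        (Q (psB τ e) (Pp i j) - Q (psB τ e) (Nn i j)) := by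
    intro i j
    simp only [GB, map_sum, map_smul, Finset.sum_apply, Pi.smul_apply, smul_eq_mul, mul_sub,
      Finset.sum_sub_distrib]
  have hexp : (n : ℝ) * ∑ e : Fin n → Bool, Q (psB τ e) (vB e)
      = ∑ i, ∑ j, (Q (GB τ i j) (Pp i j) - Q (GB τ i j) (Nn i j)) := by
    rw [Finset.mul_sum]
    simp only [hQG]
    rw [Finset.sum_congr rfl (fun e _ => expansion _ (hmem e) e), Finset.sum_comm]
    refine Finset.sum_congr rfl fun i _ => ?_
    rw [Finset.sum_comm]
  have hG : ∀ i j : Fin n, - (K * (2 ^ n * 2 * τ ^ 3) : ℝ)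
      ≤ Q (GB τ i j) (Pp i j) - Q (GB τ i j) (Nn i j) := by
    intro i j
    have h1 := (hK _ (GB_mem τ i j) _ (GB_lip τ i j)).dist_le_mul (Pp i j) (Nn i j)
    rw [dist_Pp_Nn, Real.dist_eq, mul_one] at h1
    push_cast at h1
    exact (abs_le.1 h1).1
  have hfin : (n : ℝ) * (n * - (K * (2 ^ n * 2 * τ ^ 3) : ℝ))
      ≤ n * ∑ e : Fin n → Bool, Q (psB τ e) (vB e) := by
    rw [hexp]
    have := Finset.sum_le_sum (s := Finset.univ) (fun i (_ : i ∈ Finset.univ) =>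
      Finset.sum_le_sum (s := Finset.univ) (fun j (_ : j ∈ Finset.univ) => hG i j))
    simpa using this
  have hfin2 := le_of_mul_le_mul_left hfin hn0
  have h2n : (0 : ℝ) < 2 ^ n := by positivity
  refine le_of_mul_le_mul_left ?_ h2n
  nlinarith

lemma K_ge_one (n : ℕ) (hn : 1 ≤ n)
    (Q : (↥(UBall (EuclideanSpace ℝ (Fin n))) → ℝ) →ₗ[ℝ]
         (↥(UBall (EuclideanSpace ℝ (Fin n))) → ℝ))
    (hproj : ∀ f ∈ PhomB 2 (EuclideanSpace ℝ (Fin n)), Q f = f)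
    (K : NNReal)
    (hK : ∀ f ∈ Lip0B (EuclideanSpace ℝ (Fin n)), ∀ L : NNReal,
      LipschitzWith L f → LipschitzWith (K * L) (Q f)) : (1 : ℝ) ≤ K := by
  let i : Fin n := ⟨0, hn⟩
  let l : EuclideanSpace ℝ (Fin n) →L[ℝ] ℝ := EuclideanSpace.proj i
  have hl : ∀ x, |l x| ≤ ‖x‖ := fun x => by
    have := PiLp.norm_apply_le x i
    simpa [l] using this
  have hP := sq_mem_PhomB l
  have hL : LipschitzWith 2
      (fun x : ↥(UBall (EuclideanSpace ℝ (Fin n))) => (l x) ^ 2) := by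
    apply LipschitzWith.of_dist_le_mul
    intro x y
    have hx : ‖(x : EuclideanSpace ℝ (Fin n))‖ ≤ 1 := mem_closedBall_zero_iff.1 x.2
    have hy : ‖(y : EuclideanSpace ℝ (Fin n))‖ ≤ 1 := mem_closedBall_zero_iff.1 y.2
    rw [Real.dist_eq, Subtype.dist_eq, dist_eq_norm, sq_sub_sq, abs_mul, ← map_sub]
    refine mul_le_mul ?_ (hl _) (abs_nonneg _) (by norm_num)
    have := abs_add_le (l x) (l y)
    have h1 := hl x
    have h2 := hl y
    push_cast
    linarith
  have h := hK _ ⟨⟨2, hL⟩, by simp [zeroB]⟩ 2 hL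
  rw [hproj _ hP] at h
  by_contra hc
  push Not at hc
  have hK0 : (0 : ℝ) ≤ K := K.2
  have hmem : ∀ t : ℝ, 0 ≤ t → t ≤ 1 → t • bv i ∈ UBall (EuclideanSpace ℝ (Fin n)) := by
    intro t h0 h1
    rw [UBall, mem_closedBall_zero_iff, norm_smul, norm_bv, Real.norm_eq_abs, abs_of_nonneg h0]
    linarith
  have hlt : ∀ t : ℝ, l (t • bv i) = t := by
    intro t
    simp [l, bv]
  have h1 := h.dist_le_mul ⟨(1 : ℝ) • bv i, hmem 1 zero_le_one le_rfl⟩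
    ⟨(K : ℝ) • bv i, hmem K hK0 hc.le⟩
  rw [Real.dist_eq, Subtype.dist_eq, dist_eq_norm] at h1
  simp only [hlt] at h1
  rw [← sub_smul, norm_smul, norm_bv, Real.norm_eq_abs, abs_of_pos (by linarith : 0 < 1 - (K : ℝ)),
    abs_of_pos (by nlinarith)] at h1
  push_cast at h1
  nlinarith [mul_pos (by linarith : 0 < 1 - (K : ℝ)) (by linarith : 0 < 1 - (K : ℝ))]

/-- **Theorem A.** If `Q` is any bounded linear projection from `Lip₀(B_{E_n})` onto
`P(²E_n)` (the latter viewed inside functions on the ball via restriction), and `K`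
bounds its operator norm with respect to the Lipschitz norm, then
`K ≥ (2/5)·((√2 − 1)/3 · π/72)^{1/5} · (n − 2√2)^{1/5}`. -/
theorem statement1 (n : ℕ) (hn : 3 ≤ n)
    (Q : (↥(UBall (EuclideanSpace ℝ (Fin n))) → ℝ) →ₗ[ℝ]
         (↥(UBall (EuclideanSpace ℝ (Fin n))) → ℝ))
    (hrange : ∀ f ∈ Lip0B (EuclideanSpace ℝ (Fin n)), Q f ∈ PhomB 2 (EuclideanSpace ℝ (Fin n)))
    (hproj : ∀ f ∈ PhomB 2 (EuclideanSpace ℝ (Fin n)), Q f = f)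
    (K : NNReal)
    (hK : ∀ f ∈ Lip0B (EuclideanSpace ℝ (Fin n)), ∀ L : NNReal,
      LipschitzWith L f → LipschitzWith (K * L) (Q f)) :
    (2 / 5) * ((Real.sqrt 2 - 1) / 3 * (Real.pi / 72)) ^ ((1 : ℝ) / 5)
      * ((n : ℝ) - 2 * Real.sqrt 2) ^ ((1 : ℝ) / 5) ≤ (K : ℝ) := by
  have hn0 : (0 : ℝ) < n := by exact_mod_cast (by omega : 0 < n)
  have h1 := K_ge_one n (by omega) Q hproj K hK
  obtain ⟨r, hr, hr4⟩ : ∃ r : ℝ, 0 < r ∧ (n : ℝ) = r ^ 4 := by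
    refine ⟨√√n, by positivity, ?_⟩
    calc (n : ℝ) = √n ^ 2 := (Real.sq_sqrt (by positivity)).symm
      _ = (√√n ^ 2) ^ 2 := by rw [Real.sq_sqrt (Real.sqrt_nonneg _)]
      _ = √√n ^ 4 := by ring
  obtain ⟨t, ht⟩ : ∃ t : NNReal, (t : ℝ) = 1 / r := ⟨⟨1 / r, by positivity⟩, rfl⟩
  have hm := main_bound n (by omega) Q hrange hproj K hK t
  have hr2 : √(n : ℝ) = r ^ 2 := by
    rw [hr4, show r ^ 4 = (r ^ 2) ^ 2 by ring, Real.sqrt_sq (by positivity)]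
  rw [hr2, hr4, ht] at hm
  have e1 : (1 / r) ^ 2 / 2 * r ^ 4 = r * (r / 2) := by field_simp
  have e2 : (K : ℝ) * (1 / r * r ^ 2) + r ^ 4 * (2 * (1 / r) ^ 3 * K) = r * (3 * K) := by
    field_simp
    ring
  rw [e1, e2] at hm
  have hrK : r / 2 ≤ 3 * K := le_of_mul_le_mul_left hm hr
  have hr6 : r ≤ 6 * K := by linarith
  have hnK : (n : ℝ) ≤ 1296 * (K : ℝ) ^ 5 := by
    have h2 : r ^ 4 ≤ (6 * (K : ℝ)) ^ 4 := pow_le_pow_left₀ hr.le hr6 4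
    have h3 : (K : ℝ) ^ 4 ≤ K ^ 5 := pow_le_pow_right₀ h1 (by norm_num)
    rw [hr4]
    nlinarith
  have s1 : (1 : ℝ) ≤ √2 := Real.one_le_sqrt.2 (by norm_num)
  have s2 : √2 ≤ 3 / 2 := by
    rw [Real.sqrt_le_left (by norm_num)]; norm_num
  have hn3 : (3 : ℝ) ≤ n := by exact_mod_cast hn
  have hA0 : 0 ≤ (√2 - 1) / 3 * (Real.pi / 72) :=
    mul_nonneg (by linarith) (by positivity)
  have hA : (√2 - 1) / 3 * (Real.pi / 72) ≤ 1 / 6 * (4 / 72) := by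
    apply mul_le_mul _ _ (by positivity) (by norm_num)
    · linarith
    · linarith [Real.pi_le_four]
  have hN0 : 0 ≤ (n : ℝ) - 2 * √2 := by linarith
  rw [mul_assoc, ← Real.mul_rpow hA0 hN0]
  have hZ0 : 0 ≤ (√2 - 1) / 3 * (Real.pi / 72) * ((n : ℝ) - 2 * √2) := mul_nonneg hA0 hN0
  have hZ : (√2 - 1) / 3 * (Real.pi / 72) * ((n : ℝ) - 2 * √2) ≤ (5 / 2 * (K : ℝ)) ^ 5 := by
    have h5 : (√2 - 1) / 3 * (Real.pi / 72) * ((n : ℝ) - 2 * √2) ≤ 1 / 6 * (4 / 72) * n :=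
      mul_le_mul hA (by linarith) hN0 (by norm_num)
    rw [mul_pow]
    nlinarith [pow_nonneg K.2 5]
  have hfin := Real.rpow_le_rpow hZ0 hZ (by norm_num : (0 : ℝ) ≤ 1 / 5)
  have h55 : ((5 / 2 * (K : ℝ)) ^ 5) ^ ((1 : ℝ) / 5) = 5 / 2 * K := by
    have := Real.pow_rpow_inv_natCast (by positivity : 0 ≤ 5 / 2 * (K : ℝ)) (n := 5) (by norm_num)
    rw [show ((5 : ℕ) : ℝ)⁻¹ = (1 : ℝ) / 5 by norm_num] at this
    exact this
  rw [h55] at hfin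
  linarith
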